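/- Let X ⊆ ℝⁿ be convex, f₀, f₁, …, f_m : ℝⁿ → ℝ convex, and let x̄ be a random vector taking values in X such that f₀(x̄) and each f_i(x̄) are integrable. Let ε₁, ε₂ ≥ 0 and suppose that for every bounded nonnegative random vector z in ℝ^m (which may depend on x̄), E[Φ(x̄; x*, z)] ≤ ε₁ + ε₂ E‖z‖². Let x* ∈ X and z* ∈ ℝ^m with z* ≥ 0 componentwise satisfy Φ(x; x*, z*) ≥ 0 for all x ∈ X (as holds at any KKT point). Then E[(1/m) Σ_{i=1}^m [f_i(x̄)]_+] ≤ ε₁ + ε₂‖1 + z*‖². -/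

import Mathlib

open MeasureTheory RealInnerProductSpace Finset

/-!
Test the hypothesis with the multiplier `z = z* + 1_{f(x̄) > 0}`, raising `z*` by one on the
violated constraints. Then `zᵢ fᵢ(x̄) = z*ᵢ fᵢ(x̄) + [fᵢ(x̄)]₊`, so `Φ(x̄; x*, z)` exceeds the
average violation by `Φ(x̄; x*, z*) ≥ 0`, while `0 ≤ z ≤ 1 + z*` gives `E‖z‖² ≤ ‖1 + z*‖²`.
-/

section ViolationMultiplier

variable {ι : Type*}

/-- The multiplier vector obtained from `z` by adding one in the coordinates of the violated
constraints, where `y i` is the value of the `i`-th constraint function. It is the test vector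
for which pairing with `y` produces the positive parts of `y`. -/
noncomputable def violationMultiplier (z y : ι → ℝ) : ι → ℝ :=
  fun i => if 0 < y i then 1 + z i else z i

theorem violationMultiplier_nonneg {z : ι → ℝ} (hz : ∀ i, 0 ≤ z i) (y : ι → ℝ) (i : ι) :
    0 ≤ violationMultiplier z y i := by
  have := hz i
  unfold violationMultiplier
  split_ifs <;> linarith

theorem violationMultiplier_le_one_add (z y : ι → ℝ) (i : ι) :
    violationMultiplier z y i ≤ 1 + z i := by
  unfold violationMultiplier
  split_ifs <;> linarith

theorem violationMultiplier_mul_self (z y : ι → ℝ) (i : ι) :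
    violationMultiplier z y i * y i = z i * y i + max (y i) 0 := by
  unfold violationMultiplier
  split_ifs with hy
  · rw [max_eq_left hy.le]; ring
  · rw [max_eq_right (not_lt.mp hy), add_zero]

theorem measurable_violationMultiplier (z : ι → ℝ) : Measurable (violationMultiplier z) :=
  measurable_pi_lambda _ fun i =>
    Measurable.ite (measurableSet_lt measurable_const (measurable_pi_apply i))
      measurable_const measurable_const

end ViolationMultiplier

section Expectation

variable {Ω ι : Type*} [MeasurableSpace Ω] {P : Measure Ω} [Fintype ι]

theorem integral_sum_sq_le_sum_sq [IsProbabilityMeasure P] {z : Ω → ι → ℝ} {b : ι → ℝ}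
    (hz : ∀ ω i, 0 ≤ z ω i) (hzb : ∀ ω i, z ω i ≤ b i) :
    ∫ ω, ∑ i, z ω i ^ 2 ∂P ≤ ∑ i, b i ^ 2 :=
  calc ∫ ω, ∑ i, z ω i ^ 2 ∂P
      ≤ ∫ _, ∑ i, b i ^ 2 ∂P :=
        integral_mono_of_nonneg (.of_forall fun _ => sum_nonneg fun _ _ => sq_nonneg _)
          (integrable_const _)
          (.of_forall fun ω => sum_le_sum fun i _ => pow_le_pow_left₀ (hz ω i) (hzb ω i) 2)
    _ = ∑ i, b i ^ 2 := by simp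

theorem integral_sum_max_le_integral_violationMultiplier {g : Ω → ℝ} {y : Ω → ι → ℝ}
    {z : ι → ℝ} {c : ℝ} (hg : Integrable g P) (hy : ∀ i, Integrable (fun ω => y ω i) P)
    (hgy : ∀ᵐ ω ∂P, 0 ≤ g ω + c * ∑ i, z i * y ω i) :
    ∫ ω, c * ∑ i, max (y ω i) 0 ∂P ≤
      ∫ ω, (g ω + c * ∑ i, violationMultiplier z (y ω) i * y ω i) ∂P := by
  have hpos (i : ι) : Integrable (fun ω => max (y ω i) 0) P := (hy i).pos_part
  simp only [violationMultiplier_mul_self]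
  refine integral_mono_ae ((integrable_finsetSum _ fun i _ => hpos i).const_mul c)
    (hg.add ((integrable_finsetSum _ fun i _ =>
      ((hy i).const_mul (z i)).add (hpos i)).const_mul c)) ?_
  filter_upwards [hgy] with ω hω
  rw [sum_add_distrib, mul_add]
  linarith

end Expectation

theorem statement2_general {Ω ι E : Type*} [MeasurableSpace Ω] [Fintype ι]
    (P : Measure Ω) [IsProbabilityMeasure P] (X : Set E) (f0 : E → ℝ) (f : ι → E → ℝ)
    (xbar : Ω → E) (hxbarX : ∀ᵐ ω ∂P, xbar ω ∈ X)
    (hint0 : Integrable (fun ω => f0 (xbar ω)) P)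
    (hint : ∀ i, Integrable (fun ω => f i (xbar ω)) P)
    (c ε₁ ε₂ : ℝ) (hε₂ : 0 ≤ ε₂) (xs : E) (zs : ι → ℝ) (hzs : ∀ i, 0 ≤ zs i)
    (hopt : ∀ x ∈ X, 0 ≤ f0 x - f0 xs + c * ∑ i, zs i * f i x)
    (hbound : ∀ z : Ω → ι → ℝ, Measurable z → (∀ ω i, 0 ≤ z ω i) →
      (∃ B, ∀ ω i, z ω i ≤ B) →
      (∫ ω, (f0 (xbar ω) - f0 xs + c * ∑ i, z ω i * f i (xbar ω)) ∂P)
        ≤ ε₁ + ε₂ * ∫ ω, ∑ i, z ω i ^ 2 ∂P) :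
    (∫ ω, c * ∑ i, max (f i (xbar ω)) 0 ∂P) ≤ ε₁ + ε₂ * ∑ i, (1 + zs i) ^ 2 := by
  -- `hbound` only admits measurable multipliers, hence the measurable version `y` of `f(x̄)`.
  obtain ⟨y, hy_meas, hy⟩ : AEMeasurable (fun ω i => f i (xbar ω)) P :=
    aemeasurable_pi_lambda _ fun i => (hint i).aemeasurable
  let z (ω : Ω) : ι → ℝ := violationMultiplier zs (y ω)
  have hz_nonneg (ω : Ω) : ∀ i, 0 ≤ z ω i := violationMultiplier_nonneg hzs (y ω)
  have hz_le (ω : Ω) : ∀ i, z ω i ≤ 1 + zs i := violationMultiplier_le_one_add zs (y ω)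
  obtain ⟨B, hB⟩ := Finite.bddAbove_range fun i => 1 + zs i
  calc ∫ ω, c * ∑ i, max (f i (xbar ω)) 0 ∂P
      ≤ ∫ ω, (f0 (xbar ω) - f0 xs +
          c * ∑ i, violationMultiplier zs (fun j => f j (xbar ω)) i * f i (xbar ω)) ∂P :=
        integral_sum_max_le_integral_violationMultiplier (hint0.sub (integrable_const _)) hint
          (hxbarX.mono fun ω => hopt (xbar ω))
    _ = ∫ ω, (f0 (xbar ω) - f0 xs + c * ∑ i, z ω i * f i (xbar ω)) ∂P :=
        integral_congr_ae (hy.mono fun ω hω => by simp only [z, ← hω])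
    _ ≤ ε₁ + ε₂ * ∫ ω, ∑ i, z ω i ^ 2 ∂P :=
        hbound z ((measurable_violationMultiplier zs).comp hy_meas) hz_nonneg
          ⟨B, fun ω i => (hz_le ω i).trans (hB ⟨i, rfl⟩)⟩
    _ ≤ ε₁ + ε₂ * ∑ i, (1 + zs i) ^ 2 := by
        gcongr
        exact integral_sum_sq_le_sum_sq hz_nonneg hz_le

/-- under the same hypotheses, the expected average constraint violation
random vector `z`, and `(x*, z*)` satisfies `Φ(x; x*, z*) ≥ 0` on `X` (as at a KKT point),
satisfies `E[(1/m) Σᵢ [fᵢ(x̄)]₊] ≤ ε₁ + ε₂‖1 + z*‖²`. -/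
theorem statement2 {n m : ℕ} (hm : 0 < m)
    {Ω : Type*} [MeasurableSpace Ω] (P : Measure Ω) [IsProbabilityMeasure P]
    (X : Set (EuclideanSpace ℝ (Fin n))) (hX : Convex ℝ X)
    (f0 : EuclideanSpace ℝ (Fin n) → ℝ) (f : Fin m → EuclideanSpace ℝ (Fin n) → ℝ)
    (hf0 : ConvexOn ℝ Set.univ f0) (hf : ∀ i, ConvexOn ℝ Set.univ (f i))
    (xbar : Ω → EuclideanSpace ℝ (Fin n)) (hxbarX : ∀ ω, xbar ω ∈ X)
    (hxbar_meas : Measurable xbar)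
    (hint0 : Integrable (fun ω => f0 (xbar ω)) P)
    (hint : ∀ i, Integrable (fun ω => f i (xbar ω)) P)
    (ε₁ ε₂ : ℝ) (hε₁ : 0 ≤ ε₁) (hε₂ : 0 ≤ ε₂)
    (xs : EuclideanSpace ℝ (Fin n)) (hxsX : xs ∈ X)
    (zs : Fin m → ℝ) (hzs : ∀ i, 0 ≤ zs i)
    (hopt : ∀ x ∈ X, 0 ≤ f0 x - f0 xs + (m : ℝ)⁻¹ * ∑ i, zs i * f i x)
    (hbound : ∀ z : Ω → Fin m → ℝ, Measurable z → (∀ ω i, 0 ≤ z ω i) →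
      (∃ B, ∀ ω i, z ω i ≤ B) →
      (∫ ω, (f0 (xbar ω) - f0 xs + (m : ℝ)⁻¹ * ∑ i, z ω i * f i (xbar ω)) ∂P)
        ≤ ε₁ + ε₂ * ∫ ω, ∑ i, z ω i ^ 2 ∂P) :
    (∫ ω, (m : ℝ)⁻¹ * ∑ i, max (f i (xbar ω)) 0 ∂P) ≤ ε₁ + ε₂ * ∑ i, (1 + zs i) ^ 2 :=
  statement2_general P X f0 f xbar (.of_forall hxbarX) hint0 hint (m : ℝ)⁻¹ ε₁ ε₂ hε₂ xs zs hzs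
    hopt hbound
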